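/- Let K be a compact Hausdorff space, X a uniformly convex complex Banach space, and S an X-valued function space over a uniform algebra on K with base algebra A := {x* ∘ f : f ∈ S, x* ∈ X*}. Let Γ ⊆ K be a closed boundary for A in which the set of strong boundary points of A is dense (these properties hold for the Shilov boundary of A). If every f ∈ S with ‖f‖ = 1 is a Δ-point of S (i.e., f belongs to the closed convex hull of {g ∈ B_S : ‖f − g‖ ≥ 2 − ε} for every ε > 0), then Γ has no isolated points. -/

import Mathlib

set_option maxHeartbeats 1000000
set_option synthInstance.maxHeartbeats 1000000

/-- `t₀` is a strong boundary point for the algebra `A ⊆ C(K,ℂ)`. -/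
def IsStrongBoundaryPoint {K : Type*} [TopologicalSpace K] [CompactSpace K]
    (A : Subalgebra ℂ C(K, ℂ)) (t₀ : K) : Prop :=
  ∀ U : Set K, IsOpen U → t₀ ∈ U →
    ∃ h ∈ A, h t₀ = 1 ∧ ‖h‖ = 1 ∧ ∃ c : ℝ, c < 1 ∧ ∀ t ∉ U, ‖h t‖ ≤ c

/-!
Let `t` be an isolated point of `Γ`. Density makes `t` a strong boundary point, so powers of a
peaking function, multiplied by an element of `S`, produce a norm-one `F ∈ S` with `‖F t‖ = 1` and
`‖F‖ ≤ 1 / 2` on the rest of `Γ`. If `g` in the unit ball is at distance almost `2` from `F`, the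
distance must be realised at `t`; hence evaluation at `t` carries the Δ-point `F` of `S` to a
Δ-point `F t` of `X`. A uniformly convex space has no Δ-points of norm one: the elements of its unit
ball that are almost at distance `2` from a unit vector `x` all lie in the ball of radius `1`
around `-x`, which misses `x`.
-/

open Set

section DeltaPoint

variable {E F : Type*} [SeminormedAddCommGroup E] [NormedSpace ℝ E]
  [SeminormedAddCommGroup F] [NormedSpace ℝ F]

/-- `x` is a Δ-point of `E`: it lies in the closed convex hull of the elements of the unit ball at
distance almost `2` from it. The usual normalisation `‖x‖ = 1` is not built in. -/
def IsDeltaPoint (x : E) : Prop :=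
  ∀ ε > (0 : ℝ), x ∈ closure (convexHull ℝ {y : E | ‖y‖ ≤ 1 ∧ 2 - ε ≤ ‖x - y‖})

theorem IsDeltaPoint.map {x : E} (hx : IsDeltaPoint x) (T : E →L[ℝ] F)
    (hT : ∀ y, ‖y‖ ≤ 1 → ‖T y‖ ≤ 1) {r : ℝ} (hr : r < 2)
    (hdist : ∀ y, ‖y‖ ≤ 1 → ‖x - y‖ ≤ max r ‖T x - T y‖) : IsDeltaPoint (T x) := by
  intro ε hε
  obtain ⟨η, hη, hη_lt⟩ : ∃ η > 0, η < min ε (2 - r) := exists_between (by simp [hε, hr])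
  obtain ⟨hηε, hηr⟩ := lt_min_iff.1 hη_lt
  have hfar : T '' {y | ‖y‖ ≤ 1 ∧ 2 - η ≤ ‖x - y‖} ⊆ {z | ‖z‖ ≤ 1 ∧ 2 - ε ≤ ‖T x - z‖} := by
    rintro _ ⟨y, ⟨hy, hxy⟩, rfl⟩
    refine ⟨hT y hy, ?_⟩
    rcases le_max_iff.1 (hdist y hy) with h | h <;> linarith
  refine map_mem_closure T.continuous (hx η hη) (mapsTo_iff_image_subset.2 ?_)
  exact (T.toLinearMap.image_convexHull _).trans_subset (convexHull_mono hfar)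

theorem not_isDeltaPoint_of_norm_eq_one [UniformConvexSpace E] {x : E} (hx : ‖x‖ = 1) :
    ¬IsDeltaPoint x := by
  intro hΔ
  obtain ⟨δ, hδ, hconvex⟩ := exists_forall_closed_ball_dist_add_le_two_sub E one_pos
  have hfar : {y : E | ‖y‖ ≤ 1 ∧ 2 - δ / 2 ≤ ‖x - y‖} ⊆ Metric.closedBall (-x) 1 := by
    rintro y ⟨hy, hxy⟩
    by_contra hball
    rw [Metric.mem_closedBall, dist_eq_norm, sub_neg_eq_add, not_le] at hball
    have hsub : ‖x + -y‖ ≤ 2 - δ :=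
      hconvex hx.le (by rwa [norm_neg]) (by rw [sub_neg_eq_add, add_comm]; exact hball.le)
    rw [← sub_eq_add_neg] at hsub
    linarith
  have hmem : x ∈ Metric.closedBall (-x) 1 :=
    closure_minimal (convexHull_min hfar (convex_closedBall _ _)) Metric.isClosed_closedBall
      (hΔ (δ / 2) (half_pos hδ))
  rw [Metric.mem_closedBall, dist_eq_norm, sub_neg_eq_add, ← two_smul ℝ, norm_smul, hx] at hmem
  norm_num at hmem

end DeltaPoint

section BaseSet

variable {K E : Type*} [TopologicalSpace K] [SeminormedAddCommGroup E]

/-- The base functions `x* ∘ f` of a family `S` of vector-valued functions, for `f ∈ S` and `x*` a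
continuous linear functional. -/
def baseSet (𝕜 : Type*) [RCLike 𝕜] [NormedSpace 𝕜 E] (S : Set C(K, E)) : Set C(K, 𝕜) :=
  {g | ∃ f ∈ S, ∃ φ : E →L[𝕜] 𝕜, ∀ t, g t = φ (f t)}

theorem exists_mem_apply_ne_zero_of_one_mem_baseSet {𝕜 : Type*} [RCLike 𝕜]
    [NormedSpace 𝕜 E] {S : Set C(K, E)} (hS : 1 ∈ baseSet 𝕜 S) (t : K) :
    ∃ f ∈ S, f t ≠ 0 := by
  obtain ⟨f, hf, φ, hφ⟩ := hS
  refine ⟨f, hf, fun h0 ↦ one_ne_zero (α := 𝕜) ?_⟩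
  simpa [h0] using hφ t

end BaseSet

section Boundary

variable {K E : Type*} [TopologicalSpace K] [CompactSpace K] [SeminormedAddCommGroup E]

/-- `Γ` is a boundary for the family `B` of vector-valued functions: every element of `B` attains
its supremum norm on `Γ`. -/
def IsBoundary (B : Set C(K, E)) (Γ : Set K) : Prop :=
  ∀ f ∈ B, ∃ t ∈ Γ, ‖f t‖ = ‖f‖

theorem exists_norm_apply_eq_norm [Nonempty K] (f : C(K, E)) : ∃ t, ‖f t‖ = ‖f‖ := by
  obtain ⟨t, -, ht⟩ := isCompact_univ.exists_isMaxOn univ_nonempty f.continuous.norm.continuousOn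
  exact ⟨t, (f.norm_coe_le_norm t).antisymm
    ((f.norm_le (norm_nonneg _)).2 fun s ↦ ht (mem_univ s))⟩

theorem IsBoundary.of_baseSet {𝕜 : Type*} [RCLike 𝕜] [NormedSpace 𝕜 E] {S : Set C(K, E)}
    {Γ : Set K} (hΓ : IsBoundary (baseSet 𝕜 S) Γ) : IsBoundary S Γ := by
  intro f hf
  have hbase (φ : E →L[𝕜] 𝕜) : (φ : C(E, 𝕜)).comp f ∈ baseSet 𝕜 S := ⟨f, hf, φ, fun _ ↦ rfl⟩
  have : Nonempty K := (hΓ _ (hbase 0)).nonempty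
  obtain ⟨t, ht⟩ := exists_norm_apply_eq_norm f
  obtain ⟨φ, hφ_norm, hφt⟩ := exists_dual_vector'' 𝕜 (f t)
  obtain ⟨s, hsΓ, hs⟩ := hΓ _ (hbase φ)
  refine ⟨s, hsΓ, (f.norm_coe_le_norm s).antisymm ?_⟩
  calc ‖f‖ = ‖φ (f t)‖ := by rw [hφt, RCLike.norm_ofReal, abs_norm, ht]
    _ ≤ ‖(φ : C(E, 𝕜)).comp f‖ := ((φ : C(E, 𝕜)).comp f).norm_coe_le_norm t
    _ = ‖φ (f s)‖ := hs.symm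
    _ ≤ ‖f s‖ := by simpa using φ.le_of_opNorm_le hφ_norm (f s)

theorem IsBoundary.norm_eq_one {B : Set C(K, E)} {Γ : Set K} (hΓ : IsBoundary B Γ) {f : C(K, E)}
    (hf : f ∈ B) (hle : ∀ s ∈ Γ, ‖f s‖ ≤ 1) {t : K} (ht : ‖f t‖ = 1) : ‖f‖ = 1 := by
  obtain ⟨s, hsΓ, hs⟩ := hΓ f hf
  exact (hs ▸ hle s hsΓ).antisymm (ht ▸ f.norm_coe_le_norm t)

theorem IsDeltaPoint.apply_of_isBoundary [NormedSpace ℝ E] {S : Submodule ℝ C(K, E)} {Γ : Set K}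
    (hΓ : IsBoundary (S : Set C(K, E)) Γ) {f : S} (hf : IsDeltaPoint f) {t : K} {r : ℝ}
    (hr : r < 1) (hft : ∀ s ∈ Γ, s ≠ t → ‖(f : C(K, E)) s‖ ≤ r) :
    IsDeltaPoint ((f : C(K, E)) t) := by
  have hball (g : S) (hg : ‖g‖ ≤ 1) (s : K) : ‖(g : C(K, E)) s‖ ≤ 1 :=
    ((g : C(K, E)).norm_coe_le_norm s).trans hg
  refine hf.map (r := r + 1) ((ContinuousMap.evalCLM ℝ t).comp S.subtypeL)
    (fun g hg ↦ hball g hg t) (by linarith) fun g hg ↦ ?_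
  obtain ⟨s, hsΓ, hs⟩ := hΓ _ (f - g).2
  refine hs.symm.trans_le ?_
  obtain rfl | hst := eq_or_ne s t
  · exact le_max_right _ _
  · exact le_max_of_le_left ((norm_sub_le _ _).trans (add_le_add (hft s hsΓ hst) (hball g hg s)))

end Boundary

section Peak

variable {K : Type*} [TopologicalSpace K] [CompactSpace K] {A : Subalgebra ℂ C(K, ℂ)} {t : K}
  {U : Set K}

theorem IsStrongBoundaryPoint.exists_mem_apply_eq_one_norm_le (ht : IsStrongBoundaryPoint A t)
    (hU : IsOpen U) (htU : t ∈ U) {ε : ℝ} (hε : 0 < ε) :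
    ∃ h ∈ A, h t = 1 ∧ ∀ s ∉ U, ‖h s‖ ≤ ε := by
  obtain ⟨h, hA, hht, -, c, hc, hhc⟩ := ht U hU htU
  obtain ⟨n, hn⟩ := exists_pow_lt_of_lt_one hε (max_lt hc one_pos)
  refine ⟨h ^ n, A.pow_mem hA n, by simp [hht], fun s hs ↦ ?_⟩
  calc ‖(h ^ n) s‖ = ‖h s‖ ^ n := by simp
    _ ≤ max c 0 ^ n := by gcongr; exact le_max_of_le_left (hhc s hs)
    _ ≤ ε := hn.le

variable {X : Type*} [NormedAddCommGroup X] [NormedSpace ℂ X] {S : Submodule ℂ C(K, X)}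

theorem IsStrongBoundaryPoint.exists_mem_norm_apply_eq_one_norm_le (ht : IsStrongBoundaryPoint A t)
    (hmul : ∀ φ ∈ A, ∀ f ∈ S, φ • f ∈ S) (hSt : ∃ f ∈ S, f t ≠ 0)
    (hU : IsOpen U) (htU : t ∈ U) {ε : ℝ} (hε : 0 < ε) :
    ∃ F ∈ S, ‖F t‖ = 1 ∧ ∀ s ∉ U, ‖F s‖ ≤ ε := by
  obtain ⟨f, hf, hft⟩ := hSt
  have hft_pos : 0 < ‖f t‖ := norm_pos_iff.2 hft
  have hf_pos : 0 < ‖f‖ := hft_pos.trans_le (f.norm_coe_le_norm t)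
  obtain ⟨h, hA, hht, hh⟩ :=
    ht.exists_mem_apply_eq_one_norm_le hU htU (ε := ε * ‖f t‖ / ‖f‖) (by positivity)
  refine ⟨(‖f t‖⁻¹ : ℂ) • h • f, S.smul_mem _ (hmul h hA f hf), ?_, fun s hs ↦ ?_⟩
  · simp [norm_smul, hht, hft]
  · calc ‖((‖f t‖⁻¹ : ℂ) • h • f) s‖ = ‖f t‖⁻¹ * (‖h s‖ * ‖f s‖) := by simp [norm_smul]
      _ ≤ ‖f t‖⁻¹ * (ε * ‖f t‖ / ‖f‖ * ‖f‖) := by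
        gcongr
        · exact hh s hs
        · exact f.norm_coe_le_norm s
      _ = ε := by field_simp

end Peak

theorem stmt_16_general {K : Type*} [TopologicalSpace K] [CompactSpace K]
    {X : Type*} [NormedAddCommGroup X] [NormedSpace ℂ X]
    (hX : ∀ x : X, ‖x‖ = 1 → ¬IsDeltaPoint x)
    (S : Submodule ℂ C(K, X)) (A : Subalgebra ℂ C(K, ℂ))
    (hAbase : (A : Set C(K, ℂ)) = baseSet ℂ (S : Set C(K, X)))
    (hmul : ∀ φ ∈ A, ∀ f ∈ S, φ • f ∈ S)
    (Γ : Set K) (hΓbd : IsBoundary (A : Set C(K, ℂ)) Γ)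
    (hΓdense : Γ ⊆ closure {t | t ∈ Γ ∧ IsStrongBoundaryPoint A t})
    (hΔ : ∀ f : S, ‖f‖ = 1 → IsDeltaPoint f) :
    ∀ t ∈ Γ, t ∈ closure (Γ \ {t}) := by
  intro t htΓ
  by_contra htiso
  have hU {s : K} (hs : s ∈ Γ) (hst : s ≠ t) : s ∉ (closure (Γ \ {t}))ᶜ :=
    not_not.2 (subset_closure ⟨hs, hst⟩)
  have ht : IsStrongBoundaryPoint A t := by
    by_contra ht
    refine htiso (closure_mono ?_ (hΓdense htΓ))
    exact subset_sdiff_singleton (sep_subset Γ _) fun h ↦ ht h.2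
  have hSt : ∃ f ∈ S, f t ≠ 0 :=
    exists_mem_apply_ne_zero_of_one_mem_baseSet (hAbase.subset A.one_mem) t
  have hΓS : IsBoundary (S : Set C(K, X)) Γ := .of_baseSet (hAbase ▸ hΓbd)
  obtain ⟨F, hFS, hFt, hFoff⟩ := ht.exists_mem_norm_apply_eq_one_norm_le hmul hSt
    isClosed_closure.isOpen_compl htiso one_half_pos
  have hFΓ (s : K) (hs : s ∈ Γ) (hst : s ≠ t) : ‖F s‖ ≤ 1 / 2 := hFoff s (hU hs hst)
  have hF : ‖F‖ = 1 := by
    refine hΓS.norm_eq_one hFS (fun s hs ↦ ?_) hFt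
    obtain rfl | hst := eq_or_ne s t
    exacts [hFt.le, (hFΓ s hs hst).trans (by norm_num)]
  exact hX (F t) hFt <|
    IsDeltaPoint.apply_of_isBoundary (S := S.restrictScalars ℝ) hΓS (hΔ ⟨F, hFS⟩ hF)
      one_half_lt_one hFΓ

/- STATEMENT 16: Let `X` be a uniformly convex complex Banach space and `S` an
`X`-valued function space over a uniform algebra on the compact Hausdorff space `K`
with base algebra `A = {x* ∘ f : f ∈ S, x* ∈ X*}`. Let `Γ` be a closed boundary for
`A` in which the strong boundary points of `A` are dense. If every norm-one `f ∈ S`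
is a Δ-point of `S`, then `Γ` has no isolated points. -/
theorem stmt_16 {K : Type*} [TopologicalSpace K] [CompactSpace K] [T2Space K]
    {X : Type*} [NormedAddCommGroup X] [NormedSpace ℂ X] [CompleteSpace X]
    [UniformConvexSpace X]
    (S : Submodule ℂ C(K, X)) (hSclosed : IsClosed (S : Set C(K, X)))
    (A : Subalgebra ℂ C(K, ℂ))
    (hAbase : (A : Set C(K, ℂ)) =
      {g : C(K, ℂ) | ∃ f ∈ S, ∃ φ : X →L[ℂ] ℂ, ∀ t : K, g t = φ (f t)})
    (hAclosed : IsClosed (A : Set C(K, ℂ)))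
    (hAsep : ∀ s t : K, s ≠ t → ∃ g ∈ A, g s ≠ g t)
    (hmul : ∀ φ ∈ A, ∀ f ∈ S, φ • f ∈ S)
    (Γ : Set K) (hΓclosed : IsClosed Γ)
    (hΓbd : ∀ g ∈ A, ∃ t ∈ Γ, ‖g t‖ = ‖g‖)
    (hΓdense : Γ ⊆ closure {t | t ∈ Γ ∧ IsStrongBoundaryPoint A t})
    (hΔall : ∀ f : S, ‖f‖ = 1 →
      ∀ ε > (0 : ℝ), f ∈ closure (convexHull ℝ {g : S | ‖g‖ ≤ 1 ∧ 2 - ε ≤ ‖f - g‖})) :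
    ∀ t ∈ Γ, t ∈ closure (Γ \ {t}) :=
  stmt_16_general (fun _ ↦ not_isDeltaPoint_of_norm_eq_one) S A hAbase hmul Γ hΓbd hΓdense hΔall
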